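/- Let Ω, U, λ, u be as in the setting, and let z₀ ∈ Ω be a nonisolated critical point of u, i.e. ∇u(z₀) = 0 and for every ε > 0 there exists w ≠ z₀ with ‖w − z₀‖ < ε and ∇u(w) = 0. Then u(z₀) ≠ 0, and there exist r > 0, an open interval I containing 0, and an injective curve c : I → ℝ² that is real-analytic with c′(t) ≠ 0 for all t ∈ I and c(0) = z₀, such that every point of the image of c is a critical point of u, u is constantly equal to u(z₀) on the image of c, and every critical point of u lying in the open ball of radius r around z₀ belongs to the image of c. -/

import Mathlib

open Metric Set Filter Topology MeasureTheory

noncomputable section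

abbrev E2 := EuclideanSpace ℝ (Fin 2)

/-- The Laplacian of `u`: the sum of the two pure second partial derivatives. -/
def lap (u : E2 → ℝ) (z : E2) : ℝ :=
  ∑ i : Fin 2, iteratedFDeriv ℝ 2 u z (fun _ => EuclideanSpace.single i 1)

/-!
If `u z₀ = 0`, let `D^(m+1) u z₀` be the first nonvanishing derivative at `z₀`. Since `Δ u = -λ u`
vanishes at `z₀` together with its derivatives of order below `m + 1`, the contraction
`D^(m-1) (Δ u) z₀` is zero: in any two slots, `D^(m+1) u z₀` is a symmetric trace-free form on
`ℝ² = ℂ`, and such a form satisfies `b (c z) w = b z (c w)`. Complex factors thus move freely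
between the slots, so the leading form `y ↦ D^(m+1) u z₀ (y, …, y, ·)` of the derivative of `u`
vanishes only at `y = 0`, and `z₀` is an isolated critical point.

If `u z₀ ≠ 0`, then `tr D² u z₀ = -λ u z₀ ≠ 0`, so some directional derivative of `u` has a nonzero
derivative at `z₀`. By the inverse function theorem its zeros near `z₀` form an analytic curve. The
critical points lie on this curve and accumulate at `z₀`, so by the one-variable identity theorem
the derivative of `u` vanishes along the whole curve.
-/

open Asymptotics Module
open scoped ContDiff Laplacian Nat

section Taylor

variable {𝕜 E F : Type*} [NontriviallyNormedField 𝕜] [CharZero 𝕜]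
  [NormedAddCommGroup E] [NormedSpace 𝕜 E]
  [NormedAddCommGroup F] [NormedSpace 𝕜 F] [CompleteSpace F] {f : E → F} {x : E}

theorem eventually_eq_zero_of_forall_iteratedFDeriv_eq_zero (hf : AnalyticAt 𝕜 f x)
    (h : ∀ n, iteratedFDeriv 𝕜 n f x = 0) : ∀ᶠ y in 𝓝 x, f y = 0 := by
  obtain ⟨p, r, hp⟩ := hf
  filter_upwards [eball_mem_nhds x hp.r_pos] with y hy
  have hsum := hp.hasSum_iteratedFDeriv (y := y - x)
    (by simpa [mem_eball, edist_eq_enorm_sub] using hy)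
  simpa [h, hasSum_zero_iff] using hsum.unique (by simp [h])

theorem isBigO_sub_sum_iteratedFDeriv (hf : AnalyticAt 𝕜 f x) (n : ℕ) :
    (fun y ↦ f (x + y) - ∑ k ∈ Finset.range n, (k ! : 𝕜)⁻¹ • iteratedFDeriv 𝕜 k f x fun _ ↦ y)
      =O[𝓝 0] fun y ↦ ‖y‖ ^ n := by
  obtain ⟨p, r, hp⟩ := hf
  convert hp.hasFPowerSeriesAt.isBigO_sub_partialSum_pow n using 3 with y
  refine Finset.sum_congr rfl fun k _ ↦ ?_
  rw [← hp.factorial_smul, ← Nat.cast_smul_eq_nsmul 𝕜,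
    inv_smul_smul₀ (Nat.cast_ne_zero.2 k.factorial_ne_zero)]

end Taylor

section LeadingForm

variable {E F : Type*} [NormedAddCommGroup E] [NormedSpace ℝ E] [FiniteDimensional ℝ E]
  [NormedAddCommGroup F] [NormedSpace ℝ F]

theorem exists_pos_mul_pow_norm_le_norm_diagonal {n : ℕ}
    (M : ContinuousMultilinearMap ℝ (fun _ : Fin n ↦ E) F)
    (hM : ∀ y ≠ 0, M (fun _ ↦ y) ≠ 0) :
    ∃ c > 0, ∀ y ≠ 0, c * ‖y‖ ^ n ≤ ‖M fun _ ↦ y‖ := by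
  obtain ⟨c, hc, hcM⟩ := (isCompact_sphere (0 : E) 1).exists_forall_le'
    (f := fun y ↦ ‖M fun _ ↦ y‖) (by fun_prop) (a := 0)
    fun y hy ↦ norm_pos_iff.2 (hM y (ne_zero_of_mem_unit_sphere ⟨y, hy⟩))
  refine ⟨c, hc, fun y hy ↦ ?_⟩
  have hunit : ‖‖y‖⁻¹ • y‖ = 1 := norm_smul_inv_norm hy
  calc c * ‖y‖ ^ n ≤ ‖M fun _ ↦ ‖y‖⁻¹ • y‖ * ‖y‖ ^ n := by
        gcongr; exact hcM _ (by simpa using hunit)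
    _ = ‖M fun _ ↦ ‖y‖ • ‖y‖⁻¹ • y‖ := by
        rw [M.map_smul_univ (fun _ ↦ ‖y‖) fun _ ↦ ‖y‖⁻¹ • y]
        simp [norm_smul, mul_comm]
    _ = ‖M fun _ ↦ y‖ := by rw [smul_inv_smul₀ (norm_ne_zero_iff.2 hy)]

theorem eventually_ne_zero_of_iteratedFDeriv_diagonal_ne_zero [CompleteSpace F] {f : E → F} {x : E}
    {n : ℕ} (hf : AnalyticAt ℝ f x) (hlow : ∀ k < n, iteratedFDeriv ℝ k f x = 0)
    (hn : ∀ y ≠ 0, iteratedFDeriv ℝ n f x (fun _ ↦ y) ≠ 0) :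
    ∀ᶠ z in 𝓝[≠] x, f z ≠ 0 := by
  obtain ⟨c, hc, hlead⟩ := exists_pos_mul_pow_norm_le_norm_diagonal _ hn
  have hremainder : (fun y ↦ f (x + y) - (n ! : ℝ)⁻¹ • iteratedFDeriv ℝ n f x fun _ ↦ y)
      =o[𝓝 0] fun y ↦ ‖y‖ ^ n := by
    have hpow := (isLittleO_pow_pow (𝕜 := ℝ) n.lt_succ_self).comp_tendsto
      (tendsto_norm_zero (E := E))
    refine ((isBigO_sub_sum_iteratedFDeriv hf (n + 1)).congr_left fun y ↦ ?_).trans_isLittleO hpow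
    rw [Finset.sum_range_succ, Finset.sum_eq_zero, zero_add]
    exact fun k hk ↦ by simp [hlow k (Finset.mem_range.1 hk)]
  have hsmall := hremainder.bound (c := (n ! : ℝ)⁻¹ * (c / 2)) (by positivity)
  have hsub : Tendsto (fun z ↦ z - x) (𝓝 x) (𝓝 0) := by
    simpa using (continuous_sub_right x).tendsto x
  filter_upwards [(hsub.eventually hsmall).filter_mono nhdsWithin_le_nhds, self_mem_nhdsWithin]
    with z hz hzx hfz
  have hy : z - x ≠ 0 := sub_ne_zero.2 hzx
  have hpos : 0 < (n ! : ℝ)⁻¹ * (c / 2) * ‖z - x‖ ^ n := by positivity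
  have hlead' : (n ! : ℝ)⁻¹ * (c * ‖z - x‖ ^ n) ≤ (n ! : ℝ)⁻¹ * (c / 2) * ‖z - x‖ ^ n := by
    calc (n ! : ℝ)⁻¹ * (c * ‖z - x‖ ^ n)
        ≤ (n ! : ℝ)⁻¹ * ‖iteratedFDeriv ℝ n f x fun _ ↦ z - x‖ := by gcongr; exact hlead _ hy
      _ ≤ (n ! : ℝ)⁻¹ * (c / 2) * ‖z - x‖ ^ n := by simpa [hfz, norm_smul] using hz
  linarith

end LeadingForm

section SecondDerivative

variable {E F : Type*} [NormedAddCommGroup F] [NormedSpace ℝ F] [NormedAddCommGroup E]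
  {u : E → F} {z : E} {k : ℕ}

theorem iteratedFDeriv_fderiv_fderiv_comm [NormedSpace ℝ E] (hu : ContDiffAt ℝ (k + 2) u z)
    (v : Fin k → E) (a b : E) :
    iteratedFDeriv ℝ k (fderiv ℝ (fderiv ℝ u)) z v a b =
      iteratedFDeriv ℝ k (fderiv ℝ (fderiv ℝ u)) z v b a := by
  let alt : (E →L[ℝ] E →L[ℝ] F) →L[ℝ] F :=
    .apply ℝ F b ∘L .apply ℝ (E →L[ℝ] F) a - .apply ℝ F a ∘L .apply ℝ (E →L[ℝ] F) b
  have halt : alt ∘ fderiv ℝ (fderiv ℝ u) =ᶠ[𝓝 z] 0 := by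
    filter_upwards [hu.eventually (by exact_mod_cast ENat.natCast_ne_coe_top (k + 2))] with x hx
    simpa [alt, sub_eq_zero] using hx.isSymmSndFDerivAt (by simp) a b
  have hdd : ContDiffAt ℝ k (fderiv ℝ (fderiv ℝ u)) z :=
    (hu.fderiv_right (m := k + 1) (by norm_cast)).fderiv_right (by norm_cast)
  have hD := (halt.iteratedFDeriv ℝ k).eq_of_nhds
  rw [alt.iteratedFDeriv_comp_left hdd le_rfl, Pi.zero_def, iteratedFDeriv_fun_zero] at hD
  simpa [alt, sub_eq_zero] using congr($hD v)

theorem iteratedFDeriv_laplacian [InnerProductSpace ℝ E] [FiniteDimensional ℝ E]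
    {ι : Type*} [Fintype ι] (b : OrthonormalBasis ι ℝ E) (hu : ContDiffAt ℝ (k + 2) u z)
    (v : Fin k → E) :
    iteratedFDeriv ℝ k (Δ u) z v =
      ∑ i, iteratedFDeriv ℝ k (fderiv ℝ (fderiv ℝ u)) z v (b i) (b i) := by
  let trace : (E →L[ℝ] E →L[ℝ] F) →L[ℝ] F :=
    ∑ i, .apply ℝ F (b i) ∘L .apply ℝ (E →L[ℝ] F) (b i)
  have htrace : Δ u = trace ∘ fderiv ℝ (fderiv ℝ u) := by
    ext z
    simp [trace, InnerProductSpace.laplacian_eq_iteratedFDeriv_orthonormalBasis u b,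
      iteratedFDeriv_two_apply]
  have hdd : ContDiffAt ℝ k (fderiv ℝ (fderiv ℝ u)) z :=
    (hu.fderiv_right (m := k + 1) (by norm_cast)).fderiv_right (by norm_cast)
  rw [htrace, trace.iteratedFDeriv_comp_left hdd le_rfl]
  simp [trace]

end SecondDerivative

section ComplexPlane

variable {F : Type*} [NormedAddCommGroup F] [NormedSpace ℝ F]

theorem apply_mul_left_eq_apply_mul_right {b : ℂ →L[ℝ] ℂ →L[ℝ] F}
    (hsymm : b 1 Complex.I = b Complex.I 1) (htrace : b 1 1 + b Complex.I Complex.I = 0)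
    (c z w : ℂ) : b (c * z) w = b z (c * w) := by
  have hdecomp (z : ℂ) : z = z.re • 1 + z.im • Complex.I := by simp [Complex.re_add_im]
  have hII : b Complex.I Complex.I = -b 1 1 := eq_neg_of_add_eq_zero_right htrace
  rw [hdecomp (c * z), hdecomp (c * w), hdecomp z, hdecomp w]
  simp only [map_add, map_smul, add_apply, smul_apply, hsymm, hII]
  simp only [Complex.real_smul, mul_one, Complex.re_add_im, Complex.mul_re, Complex.mul_im,
    smul_add, smul_neg]
  module

theorem map_mul_eq_map_prod_mul {m : ℕ}
    (M : ContinuousMultilinearMap ℝ (fun _ : Fin m ↦ ℂ) (ℂ →L[ℝ] F))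
    (hM : ∀ v i c w, M (Function.update v i (c * v i)) w = M v (c * w)) (c v : Fin m → ℂ) (w : ℂ) :
    M (c * v) w = M v ((∏ i, c i) * w) := by
  suffices h : ∀ s : Finset (Fin m), M (s.piecewise (c * v) v) w = M v ((∏ i ∈ s, c i) * w) by
    simpa using h Finset.univ
  intro s
  induction s using Finset.induction_on generalizing w with
  | empty => simp
  | insert i s hi ih =>
    have := hM (s.piecewise (c * v) v) i (c i) w
    rw [Finset.piecewise_eq_of_notMem _ _ _ hi] at this
    rw [Finset.piecewise_insert, Pi.mul_apply, this, ih, Finset.prod_insert hi]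
    ring_nf

theorem eq_zero_of_diagonal_eq_zero {m : ℕ}
    {M : ContinuousMultilinearMap ℝ (fun _ : Fin m ↦ ℂ) (ℂ →L[ℝ] F)}
    (hM : ∀ v i c w, M (Function.update v i (c * v i)) w = M v (c * w)) {y : ℂ} (hy : y ≠ 0)
    (hMy : M (fun _ ↦ y) = 0) : M = 0 := by
  ext v w
  have := map_mul_eq_map_prod_mul M hM (fun i ↦ v i / y) (fun _ ↦ y) w
  have hv : (fun i ↦ v i / y) * (fun _ ↦ y) = v := by ext; simp [hy]
  simpa [hv, hMy] using this

theorem iteratedFDeriv_fderiv_update_mul {u : ℂ → F} {z : ℂ} {k : ℕ}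
    (hu : ContDiffAt ℝ ω u z) (hΔ : iteratedFDeriv ℝ k (Δ u) z = 0)
    (v : Fin (k + 1) → ℂ) (i : Fin (k + 1)) (c w : ℂ) :
    iteratedFDeriv ℝ (k + 1) (fderiv ℝ u) z (Function.update v i (c * v i)) w =
      iteratedFDeriv ℝ (k + 1) (fderiv ℝ u) z v (c * w) := by
  have hdu : ContDiffAt ℝ ω (fderiv ℝ u) z := hu.fderiv_right (by simp)
  have hlast (v : Fin (k + 1) → ℂ) :
      iteratedFDeriv ℝ (k + 1) (fderiv ℝ u) z
          (Function.update v (Fin.last k) (c * v (Fin.last k))) w =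
        iteratedFDeriv ℝ (k + 1) (fderiv ℝ u) z v (c * w) := by
    have htrace := iteratedFDeriv_laplacian Complex.orthonormalBasisOneI (hu.of_le le_top)
      (Fin.init v)
    simp only [hΔ, Fin.sum_univ_two, Complex.coe_orthonormalBasisOneI] at htrace
    simp only [iteratedFDeriv_succ_apply_right, Function.update_self, Fin.init_update_last]
    exact apply_mul_left_eq_apply_mul_right
      (iteratedFDeriv_fderiv_fderiv_comm (hu.of_le le_top) _ 1 Complex.I) htrace.symm c _ w
  have hswap (v : Fin (k + 1) → ℂ) :=
    hdu.iteratedFDeriv_comp_perm v (Equiv.swap i (Fin.last k))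
  rw [← hswap, ← hswap v, ← hlast]
  simp [Function.update_comp_equiv]

theorem eventually_fderiv_ne_zero_complexPlane [CompleteSpace F] {u : ℂ → F} {z : ℂ} {c : ℝ}
    (hu : AnalyticAt ℝ u z) (hz : u z = 0) (hΔ : Δ u =ᶠ[𝓝 z] c • u)
    (hne : ¬∀ᶠ w in 𝓝 z, u w = 0) : ∀ᶠ w in 𝓝[≠] z, fderiv ℝ u w ≠ 0 := by
  classical
  have hex : ∃ n, iteratedFDeriv ℝ n u z ≠ 0 := by
    by_contra! h
    exact hne (eventually_eq_zero_of_forall_iteratedFDeriv_eq_zero hu h)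
  obtain ⟨n, hn, hmin⟩ : ∃ n, iteratedFDeriv ℝ n u z ≠ 0 ∧ ∀ k < n, iteratedFDeriv ℝ k u z = 0 :=
    ⟨Nat.find hex, Nat.find_spec hex, fun k hk ↦ not_not.1 (Nat.find_min hex hk)⟩
  have hfderiv (k : ℕ) :
      iteratedFDeriv ℝ k (fderiv ℝ u) z = 0 ↔ iteratedFDeriv ℝ (k + 1) u z = 0 := by
    rw [← norm_eq_zero, norm_iteratedFDeriv_fderiv, norm_eq_zero]
  obtain _ | m := n
  · exact absurd (by ext; simp [hz]) hn
  have hmul : ∀ v i c w, iteratedFDeriv ℝ m (fderiv ℝ u) z (Function.update v i (c * v i)) w =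
      iteratedFDeriv ℝ m (fderiv ℝ u) z v (c * w) := by
    obtain _ | k := m
    · exact fun _ i ↦ i.elim0
    · refine iteratedFDeriv_fderiv_update_mul hu.contDiffAt ?_
      rw [(hΔ.iteratedFDeriv ℝ k).eq_of_nhds, iteratedFDeriv_const_smul_apply hu.contDiffAt,
        hmin k (by lia), smul_zero]
  exact eventually_ne_zero_of_iteratedFDeriv_diagonal_ne_zero hu.fderiv
    (fun k hk ↦ (hfderiv k).2 (hmin _ (by lia)))
    fun y hy h ↦ hn ((hfderiv m).1 (eq_zero_of_diagonal_eq_zero hmul hy h))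

end ComplexPlane

section Plane

variable {E E' F : Type*} [NormedAddCommGroup E] [InnerProductSpace ℝ E] [FiniteDimensional ℝ E]
  [NormedAddCommGroup F] [NormedSpace ℝ F]

theorem laplacian_comp_linearIsometryEquiv [NormedAddCommGroup E'] [InnerProductSpace ℝ E']
    [FiniteDimensional ℝ E'] (e : E' ≃ₗᵢ[ℝ] E) (u : E → F) : Δ (u ∘ e) = Δ u ∘ e := by
  let b := stdOrthonormalBasis ℝ E'
  have hcomp (z a : E') :
      iteratedFDeriv ℝ 2 (u ∘ e) z ![a, a] = iteratedFDeriv ℝ 2 u (e z) ![e a, e a] := by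
    have h := e.toContinuousLinearEquiv.iteratedFDerivWithin_comp_right u uniqueDiffOn_univ
      (x := z) (mem_univ _) 2
    simp only [preimage_univ, iteratedFDerivWithin_univ] at h
    have hvec : ![e a, e a] = e ∘ ![a, a] := by ext i; fin_cases i <;> rfl
    rw [hvec]
    exact congr($h ![a, a])
  ext z
  simp [InnerProductSpace.laplacian_eq_iteratedFDeriv_orthonormalBasis _ b,
    InnerProductSpace.laplacian_eq_iteratedFDeriv_orthonormalBasis u (b.map e), hcomp]

theorem eventually_fderiv_ne_zero_of_laplacian_eq_smul [CompleteSpace F] (hE : finrank ℝ E = 2)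
    {u : E → F} {z : E} {c : ℝ} (hu : AnalyticAt ℝ u z) (hz : u z = 0) (hΔ : Δ u =ᶠ[𝓝 z] c • u)
    (hne : ¬∀ᶠ w in 𝓝 z, u w = 0) : ∀ᶠ w in 𝓝[≠] z, fderiv ℝ u w ≠ 0 := by
  let e : ℂ ≃ₗᵢ[ℝ] E := Complex.orthonormalBasisOneI.equiv (stdOrthonormalBasis ℝ E)
    (finCongr hE.symm)
  obtain ⟨ζ, rfl⟩ := e.surjective z
  have hnhds : map e (𝓝 ζ) = 𝓝 (e ζ) := e.toHomeomorph.map_nhds_eq ζ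
  have hpunctured : map e (𝓝[≠] ζ) = 𝓝[≠] (e ζ) := e.toHomeomorph.map_punctured_nhds_eq ζ
  have hζ := eventually_fderiv_ne_zero_complexPlane (u := u ∘ e) (z := ζ) (c := c)
    (hu.comp (e.toContinuousLinearEquiv.analyticAt ζ)) hz
    (by
      rw [laplacian_comp_linearIsometryEquiv]
      exact hΔ.comp_tendsto hnhds.le)
    (by rwa [← hnhds, eventually_map] at hne)
  rw [← hpunctured, eventually_map]
  filter_upwards [hζ] with w hw h
  exact hw (e.toContinuousLinearEquiv.comp_right_fderiv.trans (by simp [h]))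

end Plane

section ZeroSet

theorem exists_analyticAt_of_fderiv_prod_eq_equiv {𝕜 E G K : Type*} [RCLike 𝕜]
    [NormedAddCommGroup E] [NormedSpace 𝕜 E] [CompleteSpace E]
    [NormedAddCommGroup G] [NormedSpace 𝕜 G] [CompleteSpace G]
    [NormedAddCommGroup K] [NormedSpace 𝕜 K]
    {g : E → G} {x : E} {ℓ : E →L[𝕜] K} {e : E ≃L[𝕜] K × G}
    (hg : AnalyticAt 𝕜 g x) (hgx : g x = 0) (he : (e : E →L[𝕜] K × G) = ℓ.prod (fderiv 𝕜 g x)) :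
    ∃ c : K → E, AnalyticAt 𝕜 c 0 ∧ c 0 = x ∧ (∀ᶠ t in 𝓝 0, ℓ (c t - x) = t) ∧
      ∀ᶠ w in 𝓝 x, g w = 0 → c (ℓ (w - x)) = w := by
  let Φ : E → K × G := fun w ↦ (ℓ (w - x), g w)
  have hΦx : Φ x = 0 := by simp [Φ, hgx]
  have hΦ : ContDiffAt 𝕜 ω Φ x := (ℓ.contDiff.contDiffAt.comp x (by fun_prop)).prodMk hg.contDiffAt
  have hΦ' : HasFDerivAt Φ (e : E →L[𝕜] K × G) x := by
    rw [he]
    exact (ℓ.hasFDerivAt.comp x ((hasFDerivAt_id x).sub_const x)).prodMk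
      hg.differentiableAt.hasFDerivAt
  have hΦs : HasStrictFDerivAt Φ (e : E →L[𝕜] K × G) x := hΦ.hasStrictFDerivAt' hΦ' (by simp)
  let Ψ := hΦs.localInverse Φ e x
  have hΨ : AnalyticAt 𝕜 Ψ 0 := by
    rw [← hΦx]
    exact (hΦ.to_localInverse hΦ' (by simp)).analyticAt
  have hslice : Tendsto (fun t : K ↦ (t, (0 : G))) (𝓝 0) (𝓝 (Φ x)) := by
    rw [hΦx]
    exact (Continuous.prodMk_left 0).tendsto 0
  refine ⟨fun t ↦ Ψ (t, 0), hΨ.fun_comp (f := fun t : K ↦ (t, (0 : G))) (by fun_prop), ?_, ?_, ?_⟩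
  · rw [← hΦs.localInverse_apply_image, hΦx]
    rfl
  · filter_upwards [hslice.eventually hΦs.eventually_right_inverse] with t ht
    exact congr(($ht).1)
  · filter_upwards [hΦs.eventually_left_inverse] with w hw hgw
    simpa only [Φ, hgw] using hw

variable {E F : Type*} [NormedAddCommGroup E] [NormedSpace ℝ E] [FiniteDimensional ℝ E]
  [NormedAddCommGroup F] [NormedSpace ℝ F]

theorem exists_equiv_eq_prod_of_ne_zero (hE : finrank ℝ E = 2) {ψ : E →L[ℝ] ℝ} (hψ : ψ ≠ 0) :
    ∃ (ℓ : E →L[ℝ] ℝ) (e : E ≃L[ℝ] ℝ × ℝ), (e : E →L[ℝ] ℝ × ℝ) = ℓ.prod ψ := by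
  obtain ⟨v, hv⟩ : ∃ v, ψ v = 1 :=
    LinearMap.surjective (f := ψ.toLinearMap) (by exact_mod_cast hψ) 1
  have hker : finrank ℝ ψ.ker = finrank ℝ ℝ := by
    have := Module.Dual.finrank_ker_add_one_of_ne_zero (f := ψ.toLinearMap) (by exact_mod_cast hψ)
    rw [finrank_self]
    exact Nat.add_right_cancel (this.trans hE)
  let split := ContinuousLinearEquiv.equivOfRightInverse ψ (.toSpanSingleton ℝ v)
    fun t ↦ by simp [hv]
  let e := (split.trans ((ContinuousLinearEquiv.refl ℝ ℝ).prodCongr (.ofFinrankEq hker))).trans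
    (.prodComm ℝ ℝ ℝ)
  exact ⟨.fst ℝ ℝ ℝ ∘L e, e, by ext <;> simp [e, split]⟩

theorem exists_analyticAt_zeros_of_frequently_eq_zero (hE : finrank ℝ E = 2) {G : E → F} {x : E}
    (hG : AnalyticAt ℝ G x) (hG' : fderiv ℝ G x ≠ 0) (hfreq : ∃ᶠ w in 𝓝[≠] x, G w = 0) :
    ∃ (ℓ : E →L[ℝ] ℝ) (c : ℝ → E), AnalyticAt ℝ c 0 ∧ c 0 = x ∧
      (∀ᶠ t in 𝓝 0, ℓ (c t - x) = t) ∧ (∀ᶠ t in 𝓝 0, G (c t) = 0) ∧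
      ∀ᶠ w in 𝓝 x, G w = 0 → c (ℓ (w - x)) = w := by
  have hGx : G x = 0 := by
    by_contra h
    exact hfreq ((hG.continuousAt.eventually_ne h).filter_mono nhdsWithin_le_nhds)
  obtain ⟨v, hv⟩ := DFunLike.ne_iff.1 hG'
  obtain ⟨L, hL⟩ := SeparatingDual.exists_ne_zero (R := ℝ) hv
  have hLG : fderiv ℝ (L ∘ G) x = L ∘L fderiv ℝ G x :=
    (L.hasFDerivAt.comp x hG.differentiableAt.hasFDerivAt).fderiv
  have hLG' : fderiv ℝ (L ∘ G) x ≠ 0 := fun h ↦ hL (by simpa [hLG] using congr($h v))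
  obtain ⟨ℓ, e, he⟩ := exists_equiv_eq_prod_of_ne_zero hE hLG'
  have : CompleteSpace E := FiniteDimensional.complete ℝ E
  obtain ⟨c, hc, hc0, hℓc, hcw⟩ :=
    exists_analyticAt_of_fderiv_prod_eq_equiv ((L.analyticAt _).comp hG) (by simp [hGx]) he
  replace hcw : ∀ᶠ w in 𝓝 x, G w = 0 → c (ℓ (w - x)) = w :=
    hcw.mono fun w hw hGw ↦ hw (by simp [hGw])
  refine ⟨ℓ, c, hc, hc0, hℓc, ?_, hcw⟩
  have hGc : AnalyticAt ℝ (G ∘ c) 0 := AnalyticAt.comp (by rwa [hc0]) hc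
  refine hGc.frequently_zero_iff_eventually_zero.1 (frequently_nhdsWithin_iff.2 ?_)
  have hℓ : Tendsto (fun w ↦ ℓ (w - x)) (𝓝 x) (𝓝 0) :=
    (by fun_prop : Continuous fun w ↦ ℓ (w - x)).tendsto' x 0 (by simp)
  refine hℓ.frequently (((frequently_nhdsWithin_iff.1 hfreq).and_eventually hcw).mono ?_)
  rintro w ⟨⟨hGw, hwx⟩, hw⟩
  refine ⟨by rw [Function.comp_apply, hw hGw, hGw], fun h ↦ hwx ?_⟩
  rw [mem_singleton_iff, ← hw hGw, h, hc0]

theorem exists_analyticOnNhd_curve_of_frequently_eq_zero (hE : finrank ℝ E = 2) {G : E → F} {x : E}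
    (hG : AnalyticAt ℝ G x) (hG' : fderiv ℝ G x ≠ 0) (hfreq : ∃ᶠ w in 𝓝[≠] x, G w = 0)
    {V : Set E} (hV : V ∈ 𝓝 x) :
    ∃ r > 0, ∃ a b : ℝ, a < 0 ∧ 0 < b ∧ ∃ c : ℝ → E,
      AnalyticOnNhd ℝ c (Ioo a b) ∧ (∀ t ∈ Ioo a b, deriv c t ≠ 0) ∧ InjOn c (Ioo a b) ∧
      c 0 = x ∧ MapsTo c (Ioo a b) V ∧ (∀ t ∈ Ioo a b, G (c t) = 0) ∧
      ∀ w ∈ ball x r, G w = 0 → w ∈ c '' Ioo a b := by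
  obtain ⟨ℓ, c, hc, hc0, hℓc, hGc, hcw⟩ :=
    exists_analyticAt_zeros_of_frequently_eq_zero hE hG hG' hfreq
  have hcV : ∀ᶠ t in 𝓝 0, c t ∈ V := hc.continuousAt (by rwa [hc0])
  obtain ⟨δ, hδ, hball⟩ := Metric.eventually_nhds_iff_ball.1
    (((hc.eventually_analyticAt.and hℓc).and hGc).and hcV)
  rw [Real.ball_eq_Ioo, zero_sub, zero_add] at hball
  have hℓ : Tendsto (fun w ↦ ℓ (w - x)) (𝓝 x) (𝓝 0) :=
    (by fun_prop : Continuous fun w ↦ ℓ (w - x)).tendsto' x 0 (by simp)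
  obtain ⟨r, hr, hzeros⟩ := Metric.eventually_nhds_iff_ball.1
    (hcw.and (hℓ.eventually (Ioo_mem_nhds (neg_lt_zero.2 hδ) hδ)))
  choose! hcan hℓc hGc hcV using fun t ht ↦ and_assoc.1 (and_assoc.1 (hball t ht))
  refine ⟨r, hr, -δ, δ, neg_lt_zero.2 hδ, hδ, c, hcan, fun t ht hderiv ↦ ?_, fun s hs t ht hst ↦ ?_,
    hc0, hcV, hGc, fun w hw hGw ↦ ⟨_, (hzeros w hw).2, (hzeros w hw).1 hGw⟩⟩
  · have hid : (fun s ↦ ℓ (c s - x)) =ᶠ[𝓝 t] id := eventually_of_mem (Ioo_mem_nhds ht.1 ht.2) hℓc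
    have hℓc' : HasDerivAt (fun s ↦ ℓ (c s - x)) (ℓ (deriv c t)) t :=
      ℓ.hasFDerivAt.comp_hasDerivAt t ((hcan t ht).differentiableAt.hasDerivAt.sub_const x)
    simpa [hderiv] using hℓc'.unique ((hasDerivAt_id t).congr_of_eventuallyEq hid)
  · rw [← hℓc s hs, hst, hℓc t ht]

end ZeroSet

theorem comp_eq_of_fderiv_eq_zero {E F : Type*} [NormedAddCommGroup E] [NormedSpace ℝ E]
    [NormedAddCommGroup F] [NormedSpace ℝ F] {u : E → F} {c : ℝ → E} {s : Set ℝ} (hs : IsOpen s)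
    (hs' : IsPreconnected s) (hu : ∀ t ∈ s, DifferentiableAt ℝ u (c t))
    (hc : DifferentiableOn ℝ c s) (hcrit : ∀ t ∈ s, fderiv ℝ u (c t) = 0) {t t₀ : ℝ} (ht : t ∈ s)
    (ht₀ : t₀ ∈ s) : u (c t) = u (c t₀) := by
  have hderiv (t) (ht : t ∈ s) : HasDerivAt (u ∘ c) 0 t := by
    simpa [hcrit t ht] using (hu t ht).hasFDerivAt.comp_hasDerivAt t
      (hc.differentiableAt (hs.mem_nhds ht)).hasDerivAt
  exact hs.is_const_of_deriv_eq_zero hs'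
    (fun t ht ↦ (hderiv t ht).differentiableAt.differentiableWithinAt)
    (fun t ht ↦ (hderiv t ht).deriv) ht ht₀

section Plane

variable {E F : Type*} [NormedAddCommGroup E] [InnerProductSpace ℝ E] [FiniteDimensional ℝ E]
  [NormedAddCommGroup F] [NormedSpace ℝ F]

theorem fderiv_fderiv_ne_zero_of_laplacian_ne_zero {u : E → F} {z : E} (h : Δ u z ≠ 0) :
    fderiv ℝ (fderiv ℝ u) z ≠ 0 := by
  contrapose! h
  simp [InnerProductSpace.laplacian_eq_iteratedFDeriv_stdOrthonormalBasis,
    iteratedFDeriv_two_apply, h]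

theorem nonisolated_critical_point_on_analytic_curve_general [CompleteSpace F]
    (hE : finrank ℝ E = 2) {U : Set E} (hUo : IsOpen U) (hUconn : IsPreconnected U) {lam : ℝ}
    (hlam : lam ≠ 0) {u : E → F} (hu : AnalyticOnNhd ℝ u U) (hne : ∃ z ∈ U, u z ≠ 0)
    (heq : ∀ z ∈ U, Δ u z + lam • u z = 0) {z₀ : E} (hz₀ : z₀ ∈ U)
    (hnoniso : ∃ᶠ w in 𝓝[≠] z₀, fderiv ℝ u w = 0) :
    u z₀ ≠ 0 ∧ ∃ r > 0, ∃ a b : ℝ, a < 0 ∧ 0 < b ∧ ∃ c : ℝ → E,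
      AnalyticOnNhd ℝ c (Ioo a b) ∧ (∀ t ∈ Ioo a b, deriv c t ≠ 0) ∧ InjOn c (Ioo a b) ∧
      c 0 = z₀ ∧ (∀ t ∈ Ioo a b, fderiv ℝ u (c t) = 0) ∧ (∀ t ∈ Ioo a b, u (c t) = u z₀) ∧
      ∀ w ∈ ball z₀ r, fderiv ℝ u w = 0 → w ∈ c '' Ioo a b := by
  have hU : U ∈ 𝓝 z₀ := hUo.mem_nhds hz₀
  have hu₀ : u z₀ ≠ 0 := by
    intro h
    refine hnoniso (eventually_fderiv_ne_zero_of_laplacian_eq_smul hE (c := -lam) (hu z₀ hz₀) h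
      (eventually_of_mem hU fun z hz ↦ ?_) fun hflat ↦ ?_)
    · simpa using eq_neg_of_add_eq_zero_left (heq z hz)
    · obtain ⟨z, hz, hzne⟩ := hne
      exact hzne (hu.eqOn_zero_of_preconnected_of_eventuallyEq_zero hUconn hz₀ hflat hz)
  have hΔ : Δ u z₀ ≠ 0 := fun h ↦ smul_ne_zero hlam hu₀ (by simpa [h] using heq z₀ hz₀)
  obtain ⟨r, hr, a, b, ha, hb, c, hc, hc', hinj, hc0, hcU, hcrit, hball⟩ :=
    exists_analyticOnNhd_curve_of_frequently_eq_zero hE (hu z₀ hz₀).fderiv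
      (fderiv_fderiv_ne_zero_of_laplacian_ne_zero hΔ) hnoniso hU
  have hconst (t) (ht : t ∈ Ioo a b) : u (c t) = u z₀ :=
    hc0 ▸ comp_eq_of_fderiv_eq_zero isOpen_Ioo isPreconnected_Ioo
      (fun t ht ↦ (hu _ (hcU ht)).differentiableAt) hc.differentiableOn hcrit ht ⟨ha, hb⟩
  exact ⟨hu₀, r, hr, a, b, ha, hb, c, hc, hc', hinj, hc0, hcrit, hconst, hball⟩

end Plane

theorem lap_eq_laplacian (u : E2 → ℝ) : lap u = Δ u := by
  ext z
  simp [lap, InnerProductSpace.laplacian_eq_iteratedFDeriv_orthonormalBasis u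
    (EuclideanSpace.basisFun (Fin 2) ℝ), iteratedFDeriv_two_apply]

theorem gradient_eq_zero_iff {𝕜 E : Type*} [RCLike 𝕜] [NormedAddCommGroup E]
    [InnerProductSpace 𝕜 E] [CompleteSpace E] {u : E → 𝕜} {z : E} :
    gradient u z = 0 ↔ fderiv 𝕜 u z = 0 := by
  simp [gradient]

theorem frequently_punctured_nhds_iff {E : Type*} [SeminormedAddCommGroup E] {p : E → Prop}
    {x : E} : (∃ᶠ w in 𝓝[≠] x, p w) ↔ ∀ ε > 0, ∃ w, w ≠ x ∧ ‖w - x‖ < ε ∧ p w := by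
  simp [frequently_nhdsWithin_iff, Metric.nhds_basis_ball.frequently_iff, dist_eq_norm, and_comm,
    and_assoc, and_left_comm]

/-- A nonisolated critical point of `u` in `Ω` has nonzero value and lies on a simple
analytic curve of critical points along which `u` is constant, and which locally
contains all critical points of `u`. -/
theorem nonisolated_critical_point_on_analytic_curve
    (Ω U : Set E2) (hΩne : Ω.Nonempty) (hΩo : IsOpen Ω)
    (hΩb : Bornology.IsBounded Ω)
    (hUo : IsOpen U) (hUconn : IsConnected U) (hsub : closure Ω ⊆ U)
    (lam : ℝ) (hlam : 0 < lam)
    (u : E2 → ℝ) (hu : AnalyticOnNhd ℝ u U)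
    (hne : ∃ z ∈ U, u z ≠ 0)
    (heq : ∀ z ∈ U, lap u z + lam * u z = 0)
    (z₀ : E2) (hz₀ : z₀ ∈ Ω) (hg0 : gradient u z₀ = 0)
    (hnoniso : ∀ ε > 0, ∃ w, w ≠ z₀ ∧ ‖w - z₀‖ < ε ∧ gradient u w = 0) :
    u z₀ ≠ 0 ∧
      ∃ r > 0, ∃ a b : ℝ, a < 0 ∧ 0 < b ∧
        ∃ c : ℝ → E2,
          AnalyticOnNhd ℝ c (Ioo a b) ∧
          (∀ t ∈ Ioo a b, deriv c t ≠ 0) ∧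
          InjOn c (Ioo a b) ∧
          c 0 = z₀ ∧
          (∀ t ∈ Ioo a b, gradient u (c t) = 0) ∧
          (∀ t ∈ Ioo a b, u (c t) = u z₀) ∧
          (∀ w ∈ ball z₀ r, gradient u w = 0 → w ∈ c '' Ioo a b) := by
  simp only [gradient_eq_zero_iff, ← frequently_punctured_nhds_iff] at hnoniso ⊢
  exact nonisolated_critical_point_on_analytic_curve_general finrank_euclideanSpace_fin hUo
    hUconn.isPreconnected hlam.ne' hu hne (lap_eq_laplacian u ▸ heq) (hsub (subset_closure hz₀))
    hnoniso
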